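/- For all integers b, d, k with 0 < d < b and k ≥ 2, the exact convergent-series identity holds: I(b,d,k) = b·log b + ∑_{m=1}^∞ (−1)^{m−1}(u_{k;m}(b,d) − u_{k−1;m}(b,d))·( ∑_{n=1}^∞ 1/(bn + d)^{m+1} + ∑_{0 ≤ a < b, a ≠ d} 1/(bd + a)^{m+1} ) + ∑_{m=1}^∞ (−1)^{m−1}(u_{k−1;m}(b,d) − u_{k−2;m}(b,d))/(bd + d)^{m+1}, where all the series converge. -/

import Mathlib

open Filter Asymptotics

/-- The Irwin harmonic sum `I(b,d,k)`: sum of `1/m` over positive integers `m`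
whose base-`b` digit list contains the digit `d` exactly `k` times. -/
noncomputable def irwinSum (b d k : ℕ) : ℝ :=
  ∑' m : ℕ, if 0 < m ∧ (Nat.digits b m).count d = k then (1 : ℝ) / m else 0

/-- The `m`-th moment of the Irwin measure. -/
noncomputable def momentU (b d k m : ℕ) : ℝ :=
  ∑' l : ℕ, ((b : ℝ) ^ (l * (m + 1)))⁻¹ *
    ∑ n ∈ Finset.range (b ^ l),
      (if ((Finset.range l).filter fun i => n / b ^ i % b = d).card = k
        then (n : ℝ) ^ m else 0)

namespace Irw

/-- number of digits equal to `d` among the lowest `l` -/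
def cnt (b d l n : ℕ) : ℕ := ((Finset.range l).filter fun i => n / b ^ i % b = d).card

lemma cnt_eq_sum (b d l n : ℕ) :
    cnt b d l n = ∑ i ∈ Finset.range l, if n / b ^ i % b = d then 1 else 0 := by
  rw [cnt, Finset.card_filter]

lemma cnt_zero (b d n : ℕ) : cnt b d 0 n = 0 := by simp [cnt]

lemma cnt_top (b d l a r : ℕ) (ha : a < b) (hr : r < b ^ l) :
    cnt b d (l + 1) (a * b ^ l + r) = cnt b d l r + if a = d then 1 else 0 := by
  have hb : 0 < b := by omega
  rw [cnt_eq_sum, cnt_eq_sum, Finset.sum_range_succ]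
  congr 1
  · apply Finset.sum_congr rfl
    intro i hi
    have hi' : i < l := Finset.mem_range.mp hi
    have : (a * b ^ l + r) / b ^ i % b = r / b ^ i % b := by
      obtain ⟨j, rfl⟩ : ∃ j, l = i + 1 + j := ⟨l - (i + 1), by omega⟩
      have e : a * b ^ (i + 1 + j) + r = r + b ^ i * (b * (a * b ^ j)) := by ring
      rw [e, Nat.add_mul_div_left _ _ (by positivity), Nat.add_mul_mod_self_left]
    rw [this]
  · have : (a * b ^ l + r) / b ^ l % b = a := by
      rw [add_comm, Nat.add_mul_div_right _ _ (by positivity), Nat.div_eq_of_lt hr, zero_add,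
        Nat.mod_eq_of_lt ha]
    rw [this]

lemma count_digits (b d : ℕ) (hb : 1 < b) (a : ℕ) (ha0 : 0 < a) (ha : a < b) :
    ∀ (l r : ℕ), r < b ^ l →
    (Nat.digits b (a * b ^ l + r)).count d = cnt b d l r + if a = d then 1 else 0 := by
  intro l
  induction l with
  | zero =>
    intro r hr
    have : r = 0 := by simpa using hr
    subst this
    simp [cnt_zero, Nat.digits_of_lt b a ha0.ne' ha, List.count_singleton]
  | succ l ih =>
    intro r hr
    have hpos : 0 < a * b ^ (l + 1) + r := by positivity
    rw [Nat.digits_def' hb hpos, List.count_cons]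
    have e : a * b ^ (l + 1) + r = r + b * (a * b ^ l) := by ring
    have h1 : (a * b ^ (l + 1) + r) % b = r % b := by rw [e, Nat.add_mul_mod_self_left]
    have h2 : (a * b ^ (l + 1) + r) / b = a * b ^ l + r / b := by
      rw [e, Nat.add_mul_div_left _ _ (by omega)]; ring
    rw [h1, h2, ih (r / b) (by rw [Nat.div_lt_iff_lt_mul (by omega)]; rw [← pow_succ]; exact hr)]
    have h3 : cnt b d (l + 1) r = cnt b d l (r / b) + if r % b = d then 1 else 0 := by
      rw [cnt_eq_sum, cnt_eq_sum, Finset.sum_range_succ']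
      congr 1
      · apply Finset.sum_congr rfl
        intro i _
        rw [pow_succ', Nat.div_div_eq_div_mul]
      · simp
    rw [h3]
    simp only [beq_iff_eq]
    ring

/-- block decomposition of a range -/
lemma sum_range_mul (b M : ℕ) (g : ℕ → ℝ) :
    ∑ r ∈ Finset.range (b * M), g r =
      ∑ a ∈ Finset.range b, ∑ r ∈ Finset.range M, g (a * M + r) := by
  induction b with
  | zero => simp
  | succ b ih => rw [Nat.succ_mul, Finset.sum_range_add, ih, Finset.sum_range_succ]

/-- sum over `r < b^l` with `k` digits `d` -/
noncomputable def S (b d k l : ℕ) (g : ℕ → ℝ) : ℝ :=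
  ∑ r ∈ Finset.range (b ^ l), if cnt b d l r = k then g r else 0

lemma S_succ (b d k l : ℕ) (g : ℕ → ℝ) :
    S b d (k + 1) (l + 1) g = ∑ a ∈ Finset.range b,
      if a = d then S b d k l (fun r => g (a * b ^ l + r))
      else S b d (k + 1) l (fun r => g (a * b ^ l + r)) := by
  unfold S
  rw [pow_succ', sum_range_mul]
  apply Finset.sum_congr rfl
  intro a ha
  split_ifs with h
  · apply Finset.sum_congr rfl
    intro r hr
    rw [cnt_top b d l a r (Finset.mem_range.mp ha) (Finset.mem_range.mp hr)]
    simp [h]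
  · apply Finset.sum_congr rfl
    intro r hr
    rw [cnt_top b d l a r (Finset.mem_range.mp ha) (Finset.mem_range.mp hr)]
    simp [h]

lemma S_succ0 (b d l : ℕ) (g : ℕ → ℝ) :
    S b d 0 (l + 1) g = ∑ a ∈ Finset.range b,
      if a = d then 0
      else S b d 0 l (fun r => g (a * b ^ l + r)) := by
  unfold S
  rw [pow_succ', sum_range_mul]
  apply Finset.sum_congr rfl
  intro a ha
  split_ifs with h
  · apply Finset.sum_eq_zero
    intro r hr
    rw [cnt_top b d l a r (Finset.mem_range.mp ha) (Finset.mem_range.mp hr)]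
    simp [h]
  · apply Finset.sum_congr rfl
    intro r hr
    rw [cnt_top b d l a r (Finset.mem_range.mp ha) (Finset.mem_range.mp hr)]
    simp [h]

lemma S_mono (b d k l : ℕ) (f g : ℕ → ℝ) (h : ∀ r < b ^ l, f r ≤ g r) :
    S b d k l f ≤ S b d k l g := by
  unfold S
  apply Finset.sum_le_sum
  intro r hr
  split_ifs
  · exact h r (Finset.mem_range.mp hr)
  · exact le_rfl

lemma S_nonneg (b d k l : ℕ) (f : ℕ → ℝ) (h : ∀ r, 0 ≤ f r) : 0 ≤ S b d k l f := by
  unfold S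
  apply Finset.sum_nonneg
  intro r hr
  split_ifs
  · exact h r
  · exact le_rfl

lemma S_mul (b d k l : ℕ) (c : ℝ) (f : ℕ → ℝ) :
    S b d k l (fun r => c * f r) = c * S b d k l f := by
  unfold S
  rw [Finset.mul_sum]
  simp

lemma S_zero_zero (b d : ℕ) (g : ℕ → ℝ) : S b d 0 0 g = g 0 := by
  simp [S, cnt_zero]

lemma S_succ_zero (b d k : ℕ) (g : ℕ → ℝ) : S b d (k + 1) 0 g = 0 := by
  simp [S, cnt_zero]

/-- normalised counts -/
noncomputable def c (b d k l : ℕ) : ℝ := ((b : ℝ) ^ l)⁻¹ * S b d k l (fun _ => 1)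

lemma c_nonneg (b d k l : ℕ) : 0 ≤ c b d k l :=
  mul_nonneg (by positivity) (S_nonneg _ _ _ _ _ (fun _ => zero_le_one))

lemma sum_ite_d (b d : ℕ) (hdb : d < b) (x y : ℝ) :
    (∑ a ∈ Finset.range b, if a = d then x else y) = x + (b - 1) * y := by
  have : ∀ a, (if a = d then x else y) = y + if a = d then x - y else 0 := by
    intro a; split_ifs <;> ring
  simp only [this, Finset.sum_add_distrib, Finset.sum_ite_eq', Finset.mem_range, hdb, if_true]
  simp
  ring

lemma c_succ (b d k l : ℕ) (hdb : d < b) :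
    c b d (k + 1) (l + 1) = (1 - (b : ℝ)⁻¹) * c b d (k + 1) l + (b : ℝ)⁻¹ * c b d k l := by
  have hb : (b : ℝ) ≠ 0 := by
    have : 0 < b := by omega
    positivity
  unfold c
  rw [S_succ, sum_ite_d b d hdb]
  field_simp
  ring

lemma c_succ0 (b d l : ℕ) (hdb : d < b) :
    c b d 0 (l + 1) = (1 - (b : ℝ)⁻¹) * c b d 0 l := by
  have hb : (b : ℝ) ≠ 0 := by
    have : 0 < b := by omega
    positivity
  unfold c
  rw [S_succ0, sum_ite_d b d hdb]
  field_simp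
  ring

lemma c_zero_zero (b d : ℕ) : c b d 0 0 = 1 := by simp [c, S_zero_zero]

lemma c_zero_succ (b d k : ℕ) : c b d (k + 1) 0 = 0 := by simp [c, S_succ_zero]

lemma c_hasSum (b d k : ℕ) (hdb : d < b) : HasSum (c b d k) b := by
  have hb0 : 0 < b := by omega
  have hb : (1 : ℝ) ≤ b := by exact_mod_cast hb0
  have hinv : (b : ℝ)⁻¹ ≤ 1 := inv_le_one_of_one_le₀ hb
  have hbi : (b : ℝ) * (b : ℝ)⁻¹ = 1 := mul_inv_cancel₀ (by positivity)
  have hi0 : 0 < (b : ℝ)⁻¹ := by positivity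
  induction k with
  | zero =>
    have hs : Summable (c b d 0) := by
      apply summable_of_sum_range_le (c := b) (c_nonneg b d 0)
      intro n
      induction n with
      | zero => simp
      | succ n ih =>
        rw [Finset.sum_range_succ', c_zero_zero]
        simp only [c_succ0 b d _ hdb, ← Finset.mul_sum]
        nlinarith
    have h := hs.hasSum
    have e : ∑' l, c b d 0 l = b := by
      have := hs.tsum_eq_zero_add
      rw [c_zero_zero] at this
      simp only [c_succ0 b d _ hdb, tsum_mul_left] at this
      have h2 : (b : ℝ)⁻¹ * ∑' l, c b d 0 l = 1 := by linarith
      calc ∑' l, c b d 0 l = (b * (b : ℝ)⁻¹) * ∑' l, c b d 0 l := by rw [hbi, one_mul]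
        _ = b := by rw [mul_assoc, h2, mul_one]
    rwa [e] at h
  | succ k ihk =>
    have hle : ∀ n, ∑ i ∈ Finset.range n, c b d k i ≤ b := fun n =>
      sum_le_hasSum _ (fun i _ => c_nonneg b d k i) ihk
    have hs : Summable (c b d (k + 1)) := by
      apply summable_of_sum_range_le (c := b) (c_nonneg b d (k + 1))
      intro n
      induction n with
      | zero => simp
      | succ n ih =>
        rw [Finset.sum_range_succ', c_zero_succ]
        simp only [c_succ b d k _ hdb, Finset.sum_add_distrib, ← Finset.mul_sum]
        have := hle n
        nlinarith
    have h := hs.hasSum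
    have e : ∑' l, c b d (k + 1) l = b := by
      have := hs.tsum_eq_zero_add
      rw [c_zero_succ] at this
      simp only [c_succ b d k _ hdb] at this
      rw [Summable.tsum_add (hs.mul_left _) (ihk.summable.mul_left _), tsum_mul_left,
        tsum_mul_left, ihk.tsum_eq] at this
      have h2 : (b : ℝ)⁻¹ * ∑' l, c b d (k + 1) l = 1 := by linarith
      calc ∑' l, c b d (k + 1) l = (b * (b : ℝ)⁻¹) * ∑' l, c b d (k + 1) l := by
            rw [hbi, one_mul]
        _ = b := by rw [mul_assoc, h2, mul_one]
    rwa [e] at h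

/-- level-`l` part of `U` -/
noncomputable def V (b d k n l : ℕ) : ℝ :=
  S b d k l (fun r => 1 / ((n : ℝ) * b ^ l + r))

noncomputable def U (b d k n : ℕ) : ℝ := ∑' l, V b d k n l

lemma V_nonneg (b d k n l : ℕ) : 0 ≤ V b d k n l :=
  S_nonneg _ _ _ _ _ (fun r => by positivity)

lemma V_le (b d k n l : ℕ) (hb : 0 < b) (hn : 0 < n) :
    V b d k n l ≤ (1 / (n : ℝ)) * c b d k l := by
  unfold V c
  rw [← mul_assoc, ← S_mul]
  apply S_mono
  intro r _
  have : (0 : ℝ) < b := by exact_mod_cast hb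
  have : (0 : ℝ) < n := by exact_mod_cast hn
  rw [mul_one, one_div, one_div, ← mul_inv]
  gcongr
  simp

lemma V_ge (b d k n l : ℕ) (hb : 0 < b) (hn : 0 < n) :
    (1 / ((n : ℝ) + 1)) * c b d k l ≤ V b d k n l := by
  unfold V c
  rw [← mul_assoc, ← S_mul]
  apply S_mono
  intro r hr
  have : (0 : ℝ) < b := by exact_mod_cast hb
  have : (0 : ℝ) < n := by exact_mod_cast hn
  have hr' : (r : ℝ) ≤ b ^ l := by exact_mod_cast hr.le
  rw [mul_one, one_div, one_div, ← mul_inv]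
  gcongr
  linarith

lemma V_summable (b d k n : ℕ) (hdb : d < b) (hn : 0 < n) : Summable (V b d k n) :=
  Summable.of_nonneg_of_le (V_nonneg b d k n) (fun l => V_le b d k n l (by omega) hn)
    ((c_hasSum b d k hdb).summable.mul_left _)

lemma U_le (b d k n : ℕ) (hdb : d < b) (hn : 0 < n) : U b d k n ≤ b / n := by
  have := (V_summable b d k n hdb hn).hasSum
  have h2 := hasSum_le (fun l => V_le b d k n l (by omega) hn) this
    ((c_hasSum b d k hdb).mul_left _)
  unfold U
  calc _ ≤ _ := h2
    _ = _ := by ring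

lemma U_ge (b d k n : ℕ) (hdb : d < b) (hn : 0 < n) : (b : ℝ) / (n + 1) ≤ U b d k n := by
  have := (V_summable b d k n hdb hn).hasSum
  have h2 := hasSum_le (fun l => V_ge b d k n l (by omega) hn)
    ((c_hasSum b d k hdb).mul_left _) this
  unfold U
  calc _ = _ := by ring
    _ ≤ _ := h2

lemma V_succ (b d k n l : ℕ) : V b d (k + 1) n (l + 1) = ∑ a ∈ Finset.range b,
      if a = d then V b d k (b * n + a) l else V b d (k + 1) (b * n + a) l := by
  unfold V
  rw [S_succ]
  apply Finset.sum_congr rfl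
  intro a _
  have : (fun r : ℕ => 1 / ((n : ℝ) * b ^ (l + 1) + ((a * b ^ l + r : ℕ) : ℝ))) =
      fun r : ℕ => 1 / (((b * n + a : ℕ) : ℝ) * b ^ l + r) := by
    funext r
    push_cast
    ring
  rw [this]

lemma U_succ (b d k n : ℕ) (hdb : d < b) (hn : 0 < n) :
    U b d (k + 1) n = ∑ a ∈ Finset.range b,
      if a = d then U b d k (b * n + a) else U b d (k + 1) (b * n + a) := by
  have hp : ∀ a, 0 < b * n + a := fun a => by
    have : 0 < b := by omega
    positivity
  unfold U
  rw [(V_summable b d (k + 1) n hdb hn).tsum_eq_zero_add]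
  have h0 : V b d (k + 1) n 0 = 0 := by simp [V, S_succ_zero]
  rw [h0, zero_add]
  simp only [V_succ]
  rw [Summable.tsum_finsetSum]
  · apply Finset.sum_congr rfl
    intro a _
    split_ifs <;> rfl
  · intro a _
    split_ifs
    · exact V_summable b d k _ hdb (hp a)
    · exact V_summable b d (k + 1) _ hdb (hp a)

/-- difference -/
noncomputable def D (b d k n : ℕ) : ℝ := U b d (k + 1) n - U b d k n

lemma ite_sum (b d : ℕ) (hdb : d < b) (f g : ℕ → ℝ) :
    (∑ a ∈ Finset.range b, if a = d then f a else g a) =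
      ∑ a ∈ Finset.range b, g a - (g d - f d) := by
  have : ∀ a, (if a = d then f a else g a) = g a - if a = d then g a - f a else 0 := by
    intro a; split_ifs <;> ring
  simp only [this, Finset.sum_sub_distrib, Finset.sum_ite_eq', Finset.mem_range, hdb, if_true]

lemma U_sum (b d k n : ℕ) (hdb : d < b) (hn : 0 < n) :
    ∑ a ∈ Finset.range b, U b d (k + 1) (b * n + a) =
      U b d (k + 1) n + D b d k (b * n + d) := by
  rw [U_succ b d k n hdb hn, ite_sum b d hdb (fun a => U b d k (b * n + a))]
  unfold D
  ring

lemma telescoped (b d k N : ℕ) (hdb : d < b) :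
    ∑ n ∈ Finset.range N, D b d k (b * (n + 1) + d) =
      (∑ m ∈ Finset.Ico (N + 1) (b * (N + 1)), U b d (k + 1) m) -
        ∑ m ∈ Finset.Ico 1 b, U b d (k + 1) m := by
  have hb : 0 < b := by omega
  have key : ∑ m ∈ Finset.range (b * (N + 1)), U b d (k + 1) m =
      ∑ m ∈ Finset.range b, U b d (k + 1) m +
      (∑ m ∈ Finset.range (N + 1), U b d (k + 1) m - U b d (k + 1) 0) +
      ∑ n ∈ Finset.range N, D b d k (b * (n + 1) + d) := by
    induction N with
    | zero => simp
    | succ N ih =>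
      rw [show b * (N + 1 + 1) = b * (N + 1) + b by ring, Finset.sum_range_add, ih,
        U_sum b d k (N + 1) hdb (by omega), Finset.sum_range_succ _ (N + 1),
        Finset.sum_range_succ (fun n => D b d k (b * (n + 1) + d)) N]
      ring
  rw [Finset.sum_Ico_eq_sub _ (by nlinarith), Finset.sum_Ico_eq_sub _ (by omega), key]
  simp
  ring

lemma sum_inv_tendsto (b : ℕ) (hb : 0 < b) :
    Tendsto (fun N : ℕ => ∑ m ∈ Finset.Ico (N + 1) (b * (N + 1)), 1 / ((m : ℝ) + 1)) atTop
      (nhds (Real.log b)) := by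
  have hb' : (0 : ℝ) < b := by exact_mod_cast hb
  have h := Real.tendsto_harmonic_sub_log
  have t1 : Tendsto (fun N : ℕ => N + 1) atTop atTop := tendsto_add_atTop_nat 1
  have t2 : Tendsto (fun N : ℕ => b * (N + 1)) atTop atTop :=
    tendsto_atTop_mono (fun N => by nlinarith) t1
  have h3 := ((h.comp t2).sub (h.comp t1)).add_const (Real.log b)
  rw [sub_self, zero_add] at h3
  refine h3.congr ?_
  intro N
  have hH : ∀ n : ℕ, ((harmonic n : ℚ) : ℝ) = ∑ m ∈ Finset.range n, 1 / ((m : ℝ) + 1) := by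
    intro n
    simp [harmonic]
  simp only [Function.comp, hH]
  rw [Finset.sum_Ico_eq_sub _ (by nlinarith)]
  push_cast
  rw [Real.log_mul hb'.ne' (by positivity)]
  ring

lemma U_tendsto (b d k : ℕ) (hdb : d < b) :
    Tendsto (fun N : ℕ => ∑ m ∈ Finset.Ico (N + 1) (b * (N + 1)), U b d k m) atTop
      (nhds (b * Real.log b)) := by
  have hb : 0 < b := by omega
  have hb' : (0 : ℝ) < b := by exact_mod_cast hb
  have lo := (sum_inv_tendsto b hb).const_mul (b : ℝ)
  have e1 : Tendsto (fun N : ℕ => 1 / ((N : ℝ) + 1)) atTop (nhds 0) :=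
    tendsto_one_div_add_atTop_nhds_zero_nat
  have hi := ((sum_inv_tendsto b hb).add e1).const_mul (b : ℝ)
  rw [add_zero] at hi
  refine tendsto_of_tendsto_of_tendsto_of_le_of_le lo hi ?_ ?_
  · intro N
    simp only
    rw [Finset.mul_sum]
    apply Finset.sum_le_sum
    intro m hm
    have := U_ge b d k m hdb (by have := Finset.mem_Ico.mp hm; omega)
    calc _ = (b : ℝ) / (m + 1) := by ring
      _ ≤ _ := this
  · intro N
    simp only
    have h1 : ∑ m ∈ Finset.Ico (N + 1) (b * (N + 1)), U b d k m ≤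
        b * ∑ m ∈ Finset.Ico (N + 1) (b * (N + 1)), 1 / (m : ℝ) := by
      rw [Finset.mul_sum]
      apply Finset.sum_le_sum
      intro m hm
      have := U_le b d k m hdb (by have := Finset.mem_Ico.mp hm; omega)
      calc _ ≤ _ := this
        _ = _ := by ring
    refine h1.trans ?_
    gcongr
    have h2 : ∑ m ∈ Finset.Ico (N + 1) (b * (N + 1)),
        (1 / ((m + 1 : ℕ) : ℝ) - 1 / (m : ℝ)) =
          1 / ((b * (N + 1) : ℕ) : ℝ) - 1 / ((N + 1 : ℕ) : ℝ) :=
      Finset.sum_Ico_sub (fun m : ℕ => 1 / (m : ℝ)) (by nlinarith)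
    rw [Finset.sum_sub_distrib] at h2
    push_cast at h2
    have : (0 : ℝ) ≤ 1 / (b * (N + 1)) := by positivity
    linarith

/-- The Irwin sum in terms of `U`. -/
lemma irwin_eq (b d k : ℕ) (hd : 0 < d) (hdb : d < b) :
    irwinSum b d (k + 1) =
      ∑ a ∈ Finset.Ico 1 b, if a = d then U b d k a else U b d (k + 1) a := by
  have hb : 1 < b := by omega
  set f : ℕ → ℝ := fun m => if 0 < m ∧ (Nat.digits b m).count d = k + 1 then (1 : ℝ) / m else 0
    with hf
  have hf0 : ∀ m, 0 ≤ f m := by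
    intro m
    simp only [hf]
    split_ifs
    · positivity
    · exact le_rfl
  have step : ∀ L, ∑ m ∈ Finset.range (b ^ L), f m = ∑ l ∈ Finset.range L,
      ∑ a ∈ Finset.Ico 1 b, if a = d then V b d k a l else V b d (k + 1) a l := by
    intro L
    induction L with
    | zero => simp [hf]
    | succ L ih =>
      rw [pow_succ', sum_range_mul, Finset.sum_range_succ _ L, ← ih,
        Finset.range_eq_Ico, Finset.sum_eq_sum_Ico_succ_bot (by omega)]
      congr 1
      · simp
      · apply Finset.sum_congr (by simp)
        intro a ha
        have ha' := Finset.mem_Ico.mp ha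
        have hc : ∀ r ∈ Finset.range (b ^ L), f (a * b ^ L + r) =
            if cnt b d L r + (if a = d then 1 else 0) = k + 1 then
              1 / ((a : ℝ) * b ^ L + r) else 0 := by
          intro r hr
          have hp : 0 < a * b ^ L + r := by
            have : 0 < a := by omega
            positivity
          simp only [hf, count_digits b d hb a (by omega) ha'.2 L r (Finset.mem_range.mp hr), hp,
            true_and]
          push_cast
          rfl
        rw [Finset.sum_congr rfl hc]
        split_ifs with h <;> simp [V, S]
  have hsum : HasSum (fun l => ∑ a ∈ Finset.Ico 1 b,
      if a = d then V b d k a l else V b d (k + 1) a l)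
      (∑ a ∈ Finset.Ico 1 b, if a = d then U b d k a else U b d (k + 1) a) := by
    apply hasSum_sum
    intro a ha
    have ha' := Finset.mem_Ico.mp ha
    split_ifs
    · exact (V_summable b d k a hdb (by omega)).hasSum
    · exact (V_summable b d (k + 1) a hdb (by omega)).hasSum
  have ht := hsum.tendsto_sum_nat
  simp only [← step] at ht
  have hmono : Monotone fun n => ∑ m ∈ Finset.range n, f m := by
    intro m n hmn
    exact Finset.sum_le_sum_of_subset_of_nonneg (Finset.range_mono hmn) (fun i _ _ => hf0 i)
  have hT := (tendsto_iff_tendsto_subseq_of_monotone hmono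
    (tendsto_pow_atTop_atTop_of_one_lt hb)).mpr ht
  exact ((hasSum_iff_tendsto_nat_of_nonneg hf0 _).mpr hT).tsum_eq

/-- level-`l` part of the moment -/
noncomputable def w (b d k m l : ℕ) : ℝ :=
  ((b : ℝ) ^ (l * (m + 1)))⁻¹ * S b d k l (fun r => (r : ℝ) ^ m)

lemma momentU_eq (b d k m : ℕ) : momentU b d k m = ∑' l, w b d k m l := rfl

lemma w_nonneg (b d k m l : ℕ) : 0 ≤ w b d k m l :=
  mul_nonneg (by positivity) (S_nonneg _ _ _ _ _ (fun r => by positivity))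

lemma w_le (b d k m l : ℕ) (hb : 0 < b) : w b d k m l ≤ c b d k l := by
  unfold w c
  rw [← S_mul, ← S_mul]
  apply S_mono
  intro r hr
  have hb' : (0 : ℝ) < b := by exact_mod_cast hb
  have hr' : (r : ℝ) ≤ b ^ l := by exact_mod_cast hr.le
  rw [mul_one]
  calc ((b : ℝ) ^ (l * (m + 1)))⁻¹ * (r : ℝ) ^ m
      ≤ ((b : ℝ) ^ (l * (m + 1)))⁻¹ * ((b : ℝ) ^ l) ^ m := by gcongr
    _ = ((b : ℝ) ^ l)⁻¹ := by
      rw [mul_add, pow_add, pow_mul, mul_one]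
      field_simp

lemma w_summable (b d k m : ℕ) (hdb : d < b) : Summable (w b d k m) :=
  Summable.of_nonneg_of_le (w_nonneg b d k m) (fun l => w_le b d k m l (by omega))
    (c_hasSum b d k hdb).summable

lemma moment_zero (b d k : ℕ) (hdb : d < b) : momentU b d k 0 = b := by
  rw [momentU_eq, ← (c_hasSum b d k hdb).tsum_eq]
  congr 1
  funext l
  simp [w, c]

lemma moment_nonneg (b d k m : ℕ) : 0 ≤ momentU b d k m := by
  rw [momentU_eq]
  exact tsum_nonneg (w_nonneg b d k m)

lemma moment_le (b d k m : ℕ) (hdb : d < b) : momentU b d k m ≤ b := by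
  rw [momentU_eq]
  exact hasSum_le (fun l => w_le b d k m l (by omega)) (w_summable b d k m hdb).hasSum
    (c_hasSum b d k hdb)

lemma V_hasSum (b d k n l : ℕ) (hb : 0 < b) (hn : 2 ≤ n) :
    HasSum (fun m => (-1 : ℝ) ^ m * w b d k m l / (n : ℝ) ^ (m + 1)) (V b d k n l) := by
  have hb' : (0 : ℝ) < b := by exact_mod_cast hb
  have hn' : (2 : ℝ) ≤ n := by exact_mod_cast hn
  have e : (fun m => (-1 : ℝ) ^ m * w b d k m l / (n : ℝ) ^ (m + 1)) = fun m =>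
      ∑ r ∈ Finset.range (b ^ l), if cnt b d l r = k then
        ((n : ℝ) * b ^ l)⁻¹ * (-(r / (n * b ^ l) : ℝ)) ^ m else 0 := by
    funext m
    unfold w S
    rw [Finset.mul_sum, Finset.mul_sum, Finset.sum_div]
    apply Finset.sum_congr rfl
    intro r _
    split_ifs
    · rw [neg_pow (r / (n * b ^ l) : ℝ), div_pow, mul_pow, ← pow_mul, mul_add, pow_add, mul_one, pow_succ]
      field_simp
    · simp
  rw [e]
  unfold V S
  apply hasSum_sum
  intro r hr
  split_ifs
  · have hr' : (r : ℝ) ≤ b ^ l := by exact_mod_cast (Finset.mem_range.mp hr).le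
    have hp : (0 : ℝ) < b ^ l := by positivity
    have hx : ‖-(r / (n * b ^ l) : ℝ)‖ < 1 := by
      rw [norm_neg, Real.norm_of_nonneg (by positivity), div_lt_one (by positivity)]
      nlinarith
    have := (hasSum_geometric_of_norm_lt_one hx).mul_left ((n : ℝ) * b ^ l)⁻¹
    have e2 : ((n : ℝ) * b ^ l)⁻¹ * (1 - -(r / (n * b ^ l) : ℝ))⁻¹ =
        1 / ((n : ℝ) * b ^ l + r) := by
      rw [← mul_inv, one_div]
      congr 1
      field_simp
      ring
    rw [e2] at this
    exact this
  · exact hasSum_zero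

lemma U_hasSum (b d k n : ℕ) (hdb : d < b) (hn : 2 ≤ n) :
    HasSum (fun m => (-1 : ℝ) ^ m * momentU b d k m / (n : ℝ) ^ (m + 1)) (U b d k n) := by
  have hb : 0 < b := by omega
  have hn' : (2 : ℝ) ≤ n := by exact_mod_cast hn
  set F : ℕ × ℕ → ℝ := fun p => (-1 : ℝ) ^ p.2 * w b d k p.2 p.1 / (n : ℝ) ^ (p.2 + 1) with hF
  have hg : Summable (fun p : ℕ × ℕ => c b d k p.1 * (1 / 2 : ℝ) ^ p.2) :=
    (c_hasSum b d k hdb).summable.mul_of_nonneg summable_geometric_two (c_nonneg b d k)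
      (fun m => by positivity)
  have hs : Summable F := by
    refine Summable.of_norm_bounded hg ?_
    rintro ⟨l, m⟩
    simp only [hF, norm_div, norm_mul, norm_pow, norm_neg, norm_one, one_pow, one_mul]
    rw [Real.norm_of_nonneg (w_nonneg b d k m l), Real.norm_of_nonneg (by positivity : (0 : ℝ) ≤ n),
      div_eq_mul_inv]
    have h1 : ((n : ℝ) ^ (m + 1))⁻¹ ≤ (1 / 2 : ℝ) ^ m := by
      rw [one_div, inv_pow]
      gcongr
      calc (2 : ℝ) ^ m ≤ 2 ^ (m + 1) := by gcongr <;> norm_num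
        _ ≤ _ := by gcongr
    exact mul_le_mul (w_le b d k m l hb) h1 (by positivity) (c_nonneg b d k l)
  have h1 : HasSum F (U b d k n) := by
    have := hs.hasSum.prod_fiberwise (fun l => V_hasSum b d k n l hb hn)
    rw [U, this.tsum_eq]
    exact hs.hasSum
  have h2 : HasSum (F ∘ Prod.swap) (U b d k n) :=
    ((Equiv.prodComm ℕ ℕ).hasSum_iff (f := F)).mpr h1
  refine h2.prod_fiberwise (fun m => ?_)
  simp only [Function.comp, Prod.swap, hF]
  rw [momentU_eq]
  exact ((w_summable b d k m hdb).hasSum.mul_left _).div_const _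

/-- the expansion terms -/
noncomputable def T (b d k n j : ℕ) : ℝ :=
  (-1 : ℝ) ^ j * (momentU b d (k + 1) (j + 1) - momentU b d k (j + 1)) / (n : ℝ) ^ (j + 2)

lemma T_hasSum (b d k n : ℕ) (hdb : d < b) (hn : 2 ≤ n) :
    HasSum (T b d k n) (-D b d k n) := by
  have h := (U_hasSum b d k n hdb hn).sub (U_hasSum b d (k + 1) n hdb hn)
  rw [← hasSum_nat_add_iff' 1] at h
  simp only [Finset.sum_range_one, moment_zero b d _ hdb, sub_self, sub_zero] at h
  rw [D, neg_sub]
  refine h.congr_fun ?_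
  intro j
  unfold T
  ring

lemma T_bound (b d k n j : ℕ) (hdb : d < b) (hn : 2 ≤ n) :
    ‖T b d k n j‖ ≤ (b / (n : ℝ) ^ 2) * (1 / 2) ^ j := by
  have hn' : (2 : ℝ) ≤ n := by exact_mod_cast hn
  unfold T
  simp only [norm_div, norm_mul, norm_pow, norm_neg, norm_one, one_pow, one_mul]
  rw [Real.norm_of_nonneg (by positivity : (0 : ℝ) ≤ n)]
  have h1 : ‖momentU b d (k + 1) (j + 1) - momentU b d k (j + 1)‖ ≤ b := by
    rw [Real.norm_eq_abs, abs_le]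
    have := moment_nonneg b d k (j + 1)
    have := moment_nonneg b d (k + 1) (j + 1)
    have := moment_le b d k (j + 1) hdb
    have := moment_le b d (k + 1) (j + 1) hdb
    constructor <;> linarith
  calc _ ≤ (b : ℝ) / (n : ℝ) ^ (j + 2) := by gcongr
    _ = (b / (n : ℝ) ^ 2) * (1 / n) ^ j := by
      rw [pow_add, one_div, inv_pow]; field_simp
    _ ≤ _ := by gcongr

lemma inv_sq_summable (b d j : ℕ) (hb : 0 < b) :
    Summable (fun n : ℕ => 1 / ((b * (n + 1) + d : ℕ) : ℝ) ^ (j + 2)) := by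
  have h0 : Summable (fun n : ℕ => 1 / ((n + 1 : ℕ) : ℝ) ^ (j + 2)) :=
    (summable_nat_add_iff 1).mpr (Real.summable_one_div_nat_pow.mpr (by omega : 1 < j + 2))
  refine Summable.of_nonneg_of_le (fun n => by positivity) (fun n => ?_) h0
  have : ((n + 1 : ℕ) : ℝ) ≤ ((b * (n + 1) + d : ℕ) : ℝ) := by
    exact_mod_cast (by nlinarith : n + 1 ≤ b * (n + 1) + d)
  gcongr

lemma T_swap (b d k : ℕ) (hdb : d < b) (B : ℕ → ℕ) (hB : ∀ n, 2 ≤ B n)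
    (h1' : Summable (fun n : ℕ => (b : ℝ) / (B n : ℝ) ^ 2)) (x : ℝ)
    (h3 : Tendsto (fun N => ∑ n ∈ Finset.range N, -D b d k (B n)) atTop (nhds x)) :
    HasSum (fun j => ∑' n : ℕ, T b d k (B n) j) x := by
  have hg : Summable (fun p : ℕ × ℕ => ((b : ℝ) / (B p.1 : ℝ) ^ 2) * (1 / 2 : ℝ) ^ p.2) :=
    h1'.mul_of_nonneg summable_geometric_two (fun n => by positivity) (fun m => by positivity)
  have hs : Summable (fun p : ℕ × ℕ => T b d k (B p.1) p.2) :=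
    Summable.of_norm_bounded hg (fun p => T_bound b d k _ p.2 hdb (hB p.1))
  have hf : ∀ n, HasSum (fun j => T b d k (B n) j) (-D b d k (B n)) :=
    fun n => T_hasSum b d k (B n) hdb (hB n)
  have h1 : HasSum (fun n => -D b d k (B n)) (∑' p : ℕ × ℕ, T b d k (B p.1) p.2) :=
    HasSum.prod_fiberwise hs.hasSum hf
  have h4 : (∑' p : ℕ × ℕ, T b d k (B p.1) p.2) = x :=
    tendsto_nhds_unique h1.tendsto_sum_nat h3
  have h5 : HasSum (fun p : ℕ × ℕ => T b d k (B p.2) p.1) x := by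
    rw [← h4]
    exact ((Equiv.prodComm ℕ ℕ).hasSum_iff
      (f := fun p : ℕ × ℕ => T b d k (B p.1) p.2)).mpr hs.hasSum
  have h6 : ∀ j, HasSum (fun n => T b d k (B n) j) (∑' n : ℕ, T b d k (B n) j) := by
    intro j
    have h7 : Summable (fun n => T b d k (B n) j) := h5.summable.prod_factor j
    exact h7.hasSum
  exact HasSum.prod_fiberwise h5 h6

lemma T_tsum (b d k : ℕ) (hd : 0 < d) (hdb : d < b) :
    HasSum (fun j => ∑' n : ℕ, T b d k (b * (n + 1) + d) j)
      (∑ m ∈ Finset.Ico 1 b, U b d (k + 1) m - b * Real.log b) := by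
  have hb : 2 ≤ b := by omega
  have hB : ∀ n : ℕ, 2 ≤ b * (n + 1) + d := fun n => by nlinarith
  have h1' : Summable (fun n : ℕ => (b : ℝ) / ((b * (n + 1) + d : ℕ) : ℝ) ^ 2) :=
    ((inv_sq_summable b d 0 (by omega)).mul_left (b : ℝ)).congr (fun n => by
      rw [zero_add, mul_one_div])
  obtain ⟨B, hBd⟩ : ∃ B : ℕ → ℕ, ∀ n, B n = b * (n + 1) + d := ⟨_, fun _ => rfl⟩
  simp only [← hBd] at hB h1' ⊢
  have h3 : Tendsto (fun N => ∑ n ∈ Finset.range N, -D b d k (B n)) atTop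
      (nhds (∑ m ∈ Finset.Ico 1 b, U b d (k + 1) m - b * Real.log b)) := by
    simp only [hBd, Finset.sum_neg_distrib, telescoped b d k _ hdb, neg_sub]
    exact (U_tendsto b d (k + 1) hdb).const_sub _
  exact T_swap b d k hdb B hB h1' _ h3

end Irw

/-- Exact convergent series for `I(b,d,k)`, `0 < d < b`, `k ≥ 2`
(series over `m ≥ 1` indexed by `m = j + 1`, series over `n ≥ 1` indexed by `n + 1`). -/
theorem irwin_d_k_series (b d k : ℕ) (hd : 0 < d) (hdb : d < b) (hk : 2 ≤ k) :
    (∀ j : ℕ, Summable fun n : ℕ =>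
      1 / ((b : ℝ) * (n + 1) + d) ^ (j + 2)) ∧
    Summable (fun j : ℕ =>
      (-1 : ℝ) ^ j * (momentU b d k (j + 1) - momentU b d (k - 1) (j + 1)) *
        ((∑' n : ℕ, 1 / ((b : ℝ) * (n + 1) + d) ^ (j + 2))
          + ∑ a ∈ Finset.range b, if a ≠ d then 1 / ((b : ℝ) * d + a) ^ (j + 2) else 0)) ∧
    Summable (fun j : ℕ =>
      (-1 : ℝ) ^ j * (momentU b d (k - 1) (j + 1) - momentU b d (k - 2) (j + 1))
        / ((b : ℝ) * d + d) ^ (j + 2)) ∧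
    irwinSum b d k = (b : ℝ) * Real.log b +
      (∑' j : ℕ,
        (-1 : ℝ) ^ j * (momentU b d k (j + 1) - momentU b d (k - 1) (j + 1)) *
          ((∑' n : ℕ, 1 / ((b : ℝ) * (n + 1) + d) ^ (j + 2))
            + ∑ a ∈ Finset.range b, if a ≠ d then 1 / ((b : ℝ) * d + a) ^ (j + 2) else 0)) +
      ∑' j : ℕ,
        (-1 : ℝ) ^ j * (momentU b d (k - 1) (j + 1) - momentU b d (k - 2) (j + 1))
          / ((b : ℝ) * d + d) ^ (j + 2) := by
  obtain ⟨k, rfl⟩ : ∃ i, k = i + 2 := ⟨k - 2, by omega⟩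
  have hb : 2 ≤ b := by omega
  simp only [show k + 2 - 1 = k + 1 by omega, show k + 2 - 2 = k by omega]
  have hsm : ∀ j : ℕ, Summable fun n : ℕ => 1 / ((b : ℝ) * (n + 1) + d) ^ (j + 2) := by
    intro j
    have := Irw.inv_sq_summable b d j (by omega)
    push_cast at this
    exact this
  have h2 : ∀ a, 2 ≤ b * d + a := fun a => by nlinarith
  have hA : HasSum (fun j : ℕ =>
      (-1 : ℝ) ^ j * (momentU b d (k + 2) (j + 1) - momentU b d (k + 1) (j + 1)) *
        ((∑' n : ℕ, 1 / ((b : ℝ) * (n + 1) + d) ^ (j + 2))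
          + ∑ a ∈ Finset.range b, if a ≠ d then 1 / ((b : ℝ) * d + a) ^ (j + 2) else 0))
      ((∑ m ∈ Finset.Ico 1 b, Irw.U b d (k + 2) m - b * Real.log b) +
        ∑ a ∈ Finset.range b, if a ≠ d then -Irw.D b d (k + 1) (b * d + a) else 0) := by
    have h3 : HasSum (fun j => ∑ a ∈ Finset.range b,
        if a ≠ d then Irw.T b d (k + 1) (b * d + a) j else 0)
        (∑ a ∈ Finset.range b, if a ≠ d then -Irw.D b d (k + 1) (b * d + a) else 0) := by
      apply hasSum_sum
      intro a _
      split_ifs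
      · exact Irw.T_hasSum b d (k + 1) _ hdb (h2 a)
      · exact hasSum_zero
    refine ((Irw.T_tsum b d (k + 1) hd hdb).add h3).congr_fun ?_
    intro j
    rw [mul_add, ← tsum_mul_left, Finset.mul_sum]
    congr 1
    · apply tsum_congr
      intro n
      unfold Irw.T
      push_cast
      ring
    · apply Finset.sum_congr rfl
      intro a _
      split_ifs
      · unfold Irw.T
        push_cast
        ring
      · simp
  have hB : HasSum (fun j : ℕ =>
      (-1 : ℝ) ^ j * (momentU b d (k + 1) (j + 1) - momentU b d k (j + 1))
        / ((b : ℝ) * d + d) ^ (j + 2)) (-Irw.D b d k (b * d + d)) := by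
    have := Irw.T_hasSum b d k _ hdb (h2 d)
    unfold Irw.T at this
    push_cast at this
    exact this
  refine ⟨hsm, hA.summable, hB.summable, ?_⟩
  rw [hA.tsum_eq, hB.tsum_eq, Irw.irwin_eq b d (k + 1) hd hdb]
  have e1 := Irw.U_succ b d (k + 1) d hdb hd
  have e2 := Irw.U_succ b d k d hdb hd
  have e3 : (∑ a ∈ Finset.range b, if a ≠ d then -Irw.D b d (k + 1) (b * d + a) else 0) +
      -Irw.D b d k (b * d + d) = Irw.U b d (k + 1) d - Irw.U b d (k + 2) d := by
    rw [e1, e2, ← Finset.sum_sub_distrib]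
    have : -Irw.D b d k (b * d + d) = ∑ a ∈ Finset.range b,
        if a = d then -Irw.D b d k (b * d + a) else 0 := by
      simp [Finset.sum_ite_eq', hdb]
    rw [this, ← Finset.sum_add_distrib]
    apply Finset.sum_congr rfl
    intro a _
    unfold Irw.D
    by_cases h : a = d <;> simp [h]
  have e4 : (∑ a ∈ Finset.Ico 1 b, if a = d then Irw.U b d (k + 1) a else Irw.U b d (k + 2) a) =
      ∑ m ∈ Finset.Ico 1 b, Irw.U b d (k + 2) m +
        (Irw.U b d (k + 1) d - Irw.U b d (k + 2) d) := by
    have : ∀ a, (if a = d then Irw.U b d (k + 1) a else Irw.U b d (k + 2) a) =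
        Irw.U b d (k + 2) a +
          if a = d then Irw.U b d (k + 1) a - Irw.U b d (k + 2) a else 0 := by
      intro a; split_ifs <;> ring
    have hm : d ∈ Finset.Ico 1 b := Finset.mem_Ico.mpr ⟨hd, hdb⟩
    simp only [this, Finset.sum_add_distrib, Finset.sum_ite_eq', hm, if_true]
  rw [e4, ← e3]
  ring
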